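/- Let G and G' be achievement positional games on disjoint vertex sets. If o(G)=o(G')=N, then o(G∪G') ≠ D; that is, it is not the case that optimal play on G∪G' leads to a draw both when Left starts and when Right starts. -/

import Mathlib

namespace APG

/-- The two players: Left and Right. -/
inductive Player : Type
  | L : Player
  | R : Player
deriving DecidableEq, Repr

/-- The opponent of a player. -/
def Player.other : Player → Player
  | .L => .R
  | .R => .L

/-- An achievement positional game: a finite vertex set together with the set of
blue edges (Left's winning sets) and the set of red edges (Right's winning sets). -/
structure Game : Type where
  V : Finset ℕ
  EL : Finset (Finset ℕ)
  ER : Finset (Finset ℕ)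

/-- The edges are nonempty subsets of the vertex set. -/
def WellFormed (G : Game) : Prop :=
  (∀ e ∈ G.EL, e ⊆ G.V ∧ e.Nonempty) ∧ (∀ e ∈ G.ER, e ⊆ G.V ∧ e.Nonempty)

/-- The winning sets of a given player. -/
def Game.edges (G : Game) : Player → Finset (Finset ℕ)
  | .L => G.EL
  | .R => G.ER

/-- The player who makes the `i`-th move (0-indexed) when `s` moves first. -/
def mover (s : Player) (i : ℕ) : Player := if i % 2 = 0 then s else s.other

/-- The set of vertices picked by player `p` along the history `h`
(the chronological list of the moves played so far), when `s` moved first. -/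
def picked (s p : Player) (h : List ℕ) : Finset ℕ :=
  ((Finset.range h.length).filter fun i => mover s i = p).image fun i => h.getD i 0

/-- The set `S` of picked vertices fills some edge of `E`. -/
def fills (E : Finset (Finset ℕ)) (S : Finset ℕ) : Prop := ∃ e ∈ E, e ⊆ S

/-- The game is over: some player has picked all the vertices of one of their edges. -/
def ended (G : Game) (s : Player) (h : List ℕ) : Prop :=
  fills G.EL (picked s .L h) ∨ fills G.ER (picked s .R h)

/-- `h` is a legal history: no vertex is picked twice, every picked vertex belongs to
the board, and no move is made after the game has ended. -/
def ValidHist (G : Game) (s : Player) (h : List ℕ) : Prop :=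
  h.Nodup ∧ (∀ x ∈ h, x ∈ G.V) ∧ ∀ k, k < h.length → ¬ ended G s (h.take k)

/-- A strategy: a map assigning to each position (history) a vertex to pick. -/
abbrev Strategy := List ℕ → ℕ

/-- Along `h`, every move of player `p` agrees with the strategy `σ`. -/
def Follows (s p : Player) (σ : Strategy) (h : List ℕ) : Prop :=
  ∀ k, k < h.length → mover s k = p → h.getD k 0 = σ (h.take k)

/-- A finished play: either the game has ended or all vertices have been picked. -/
def Complete (G : Game) (s : Player) (h : List ℕ) : Prop :=
  ended G s h ∨ h.length = G.V.card

/-- The strategy `σ` of player `p` always suggests a legal move (an unpicked vertex)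
whenever the game is not over and it is `p`'s turn. -/
def Legal (G : Game) (s p : Player) (σ : Strategy) : Prop :=
  ∀ h, ValidHist G s h → Follows s p σ h → ¬ ended G s h → h.length < G.V.card →
    mover s h.length = p → σ h ∈ G.V ∧ σ h ∉ h

/-- Player `p` has a winning strategy on `G` when `s` moves first: following it,
every finished play ends with `p` having filled one of their edges (and, the game
having ended right there, the opponent has not filled an edge first). -/
def WinsAs (G : Game) (s p : Player) : Prop :=
  ∃ σ : Strategy, Legal G s p σ ∧
    ∀ h, ValidHist G s h → Follows s p σ h → Complete G s h →
      fills (G.edges p) (picked s p h)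

/-- Player `p` has a non-losing strategy on `G` when `s` moves first: following it,
the opponent never fills one of their edges. -/
def NonLosingAs (G : Game) (s p : Player) : Prop :=
  ∃ σ : Strategy, Legal G s p σ ∧
    ∀ h, ValidHist G s h → Follows s p σ h → Complete G s h →
      ¬ fills (G.edges p.other) (picked s p.other h)

/-- The possible results of the game, for a fixed starting player. -/
inductive Result : Type
  | Lwin : Result
  | draw : Result
  | Rwin : Result
deriving DecidableEq, Repr

/-- The result of `G` with optimal play, when `s` moves first, is `r`:
a win for a player means that player has a winning strategy, a draw means
both players have non-losing strategies. -/
def resultIs (G : Game) (s : Player) : Result → Prop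
  | .Lwin => WinsAs G s .L
  | .Rwin => WinsAs G s .R
  | .draw => NonLosingAs G s .L ∧ NonLosingAs G s .R

/-- An outcome: the pair of results with optimal play
(when Left starts, when Right starts). -/
abbrev Outcome := Result × Result

/-- `G` has outcome `o`. -/
def hasOutcome (G : Game) (o : Outcome) : Prop :=
  resultIs G .L o.1 ∧ resultIs G .R o.2

/-- Numerical value of a result, from Left's point of view:
Right wins < draw < Left wins. -/
def Result.val : Result → ℕ
  | .Rwin => 0
  | .draw => 1
  | .Lwin => 2

/-- The partial order `≤_L` on outcomes, comparing both components simultaneously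
from Left's point of view. -/
def outLE (o o' : Outcome) : Prop := o.1.val ≤ o'.1.val ∧ o.2.val ≤ o'.2.val

def oL : Outcome := (.Lwin, .Lwin)
def oLminus : Outcome := (.Lwin, .draw)
def oN : Outcome := (.Lwin, .Rwin)
def oD : Outcome := (.draw, .draw)
def oRminus : Outcome := (.draw, .Rwin)
def oR : Outcome := (.Rwin, .Rwin)

/-- The updated game `G_u` after Left has picked `u`. -/
def subL (G : Game) (u : ℕ) : Game where
  V := G.V.erase u
  EL := G.EL.image fun e => e.erase u
  ER := G.ER.filter fun e => u ∉ e

/-- The updated game `G^u` after Right has picked `u`. -/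
def subR (G : Game) (u : ℕ) : Game where
  V := G.V.erase u
  EL := G.EL.filter fun e => u ∉ e
  ER := G.ER.image fun e => e.erase u

/-- The updated game `G_u^v` after Left has picked `u` and Right has picked `v`. -/
def updLR (G : Game) (u v : ℕ) : Game where
  V := (G.V.erase u).erase v
  EL := (G.EL.filter fun e => v ∉ e).image fun e => e.erase u
  ER := (G.ER.filter fun e => u ∉ e).image fun e => e.erase v

/-- The disjoint union of two games. -/
def gunion (G G' : Game) : Game where
  V := G.V ∪ G'.V
  EL := G.EL ∪ G'.EL
  ER := G.ER ∪ G'.ER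

/-!
Let a player `p` win moving first on `m` and the opponent win moving first on `n`, and suppose that
neither wins moving first on `m + n`. If `p`, moving first on `m`, can keep reaching positions of a
class `P` that `p` wins moving second, then a non-losing strategy of the opponent on `m + n` lets
the opponent keep reaching, on `n` alone, positions `b` that the opponent wins moving second and
such that `p` moving first does not win `a + b` for some `a` in `P`. Applying this twice replaces a
position `a` by a position `a'` of the same board, with some `b` between them: `p` moving first does
not win `a + b`, and the opponent moving first does not win `b + a'`.

The players alternate along such chains of failures, so that three consecutive ones compose, by a
strategy on four boards played at once. On the other hand, by induction on the number of vertices,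
one of the players wins the smaller sum `a + b` moving first. Hence each double round strictly
enlarges the set of positions `b` of `n` such that the opponent does not win `b + a` moving first,
which is impossible since `n` has finitely many positions.
-/

section Boards

variable {p : Player} {g : Game} {x y : ℕ}

@[simp] theorem Player.other_other (p : Player) : p.other.other = p := by cases p <;> rfl

theorem Player.other_ne (p : Player) : p.other ≠ p := by cases p <;> decide

theorem Player.eq_or_eq_other (p q : Player) : q = p ∨ q = p.other := by
  cases p <;> cases q <;> decide

/-- The updated game after player `p` has picked `x`: `G_x` for Left, `G^x` for Right. -/
def play : Player → Game → ℕ → Game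
  | .L => subL
  | .R => subR

@[simp] theorem play_V (p : Player) (g : Game) (x : ℕ) : (play p g x).V = g.V.erase x := by
  cases p <;> rfl

@[simp] theorem edges_play_self (p : Player) (g : Game) (x : ℕ) :
    (play p g x).edges p = (g.edges p).image fun e => e.erase x := by
  cases p <;> rfl

@[simp] theorem edges_play_other (p : Player) (g : Game) (x : ℕ) :
    (play p g x).edges p.other = (g.edges p.other).filter fun e => x ∉ e := by
  cases p <;> rfl

theorem Game.ext_edges {g g' : Game} (hV : g.V = g'.V) (hE : ∀ p, g.edges p = g'.edges p) :
    g = g' := by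
  obtain ⟨V, EL, ER⟩ := g
  obtain ⟨V', EL', ER'⟩ := g'
  exact Game.mk.injEq .. ▸ ⟨hV, hE .L, hE .R⟩

theorem play_comm (p q : Player) (g : Game) (hxy : x ≠ y) :
    play p (play q g x) y = play q (play p g y) x := by
  have hx : ∀ e : Finset ℕ, x ∈ e.erase y ↔ x ∈ e := by simp [hxy]
  have hy : ∀ e : Finset ℕ, y ∈ e.erase x ↔ y ∈ e := by simp [hxy.symm]
  refine Game.ext_edges (by simp only [play_V, Finset.erase_right_comm]) fun r => ?_
  cases p <;> cases q <;> cases r <;>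
    simp [play, subL, subR, Game.edges, Finset.image_image, Function.comp_def, Finset.filter_image,
      Finset.filter_filter, Finset.erase_right_comm, and_comm, hx, hy]

theorem fills_play_self {S : Finset ℕ} :
    fills ((play p g x).edges p) S ↔ fills (g.edges p) (insert x S) := by
  simp only [fills, edges_play_self, Finset.exists_mem_image, Finset.subset_insert_iff]

theorem fills_play_other {S : Finset ℕ} (hx : x ∉ S) :
    fills ((play p g x).edges p.other) S ↔ fills (g.edges p.other) S := by
  simp only [fills, edges_play_other, Finset.mem_filter]
  exact exists_congr fun e =>
    ⟨fun h => ⟨h.1.1, h.2⟩, fun h => ⟨⟨h.1, fun hxe => hx (h.2 hxe)⟩, h.2⟩⟩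

end Boards

section Families

variable {p q : Player} {s s' a b c m n : Multiset Game}

/-- Player `p` has filled an edge on one of the boards played simultaneously. A family of boards is
a multiset, so that several copies of the same board may be in play. -/
def Won (p : Player) (s : Multiset Game) : Prop := ∃ g ∈ s, fills (g.edges p) ∅

/-- Player `p` can move from the family of boards `s` to `s'`, by picking a vertex of one board. -/
def Moves (p : Player) (s s' : Multiset Game) : Prop :=
  ∃ g r x, s = g ::ₘ r ∧ x ∈ g.V ∧ s' = play p g x ::ₘ r

/-- The number of unpicked vertices. -/
def size (s : Multiset Game) : ℕ := (s.map fun g => g.V.card).sum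

theorem won_add : Won p (m + n) ↔ Won p m ∨ Won p n := by
  simp only [Won, Multiset.mem_add, or_and_right, exists_or]

theorem won_singleton {g : Game} : Won p {g} ↔ fills (g.edges p) ∅ := by
  simp only [Won, Multiset.mem_singleton, exists_eq_left]

theorem Won.of_extra_move (h : Won p s) (hm : Moves p s s') : Won p s' := by
  obtain ⟨g, r, x, rfl, -, rfl⟩ := hm
  rw [← Multiset.singleton_add, won_add, won_singleton] at h ⊢
  exact h.imp_left fun ⟨e, he, hs⟩ =>
    fills_play_self.2 ⟨e, he, hs.trans (Finset.empty_subset _)⟩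

theorem Won.of_undone_reply (h : Won p s') (hm : Moves p.other s s') : Won p s := by
  obtain ⟨g, r, x, rfl, -, rfl⟩ := hm
  rw [← Multiset.singleton_add, won_add, won_singleton] at h ⊢
  have := fills_play_other (p := p.other) (g := g) (Finset.notMem_empty x)
  rw [Player.other_other] at this
  exact h.imp_left this.1

theorem moves_singleton {g : Game} : Moves p {g} s ↔ ∃ x ∈ g.V, s = {play p g x} := by
  constructor
  · rintro ⟨g', r, x, he, hx, rfl⟩
    obtain ⟨rfl, rfl⟩ := (Multiset.singleton_eq_cons_iff r).1 he
    exact ⟨x, hx, rfl⟩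
  · rintro ⟨x, hx, rfl⟩
    exact ⟨g, 0, x, rfl, hx, rfl⟩

theorem Moves.add_right (h : Moves p m s) (n : Multiset Game) : Moves p (m + n) (s + n) := by
  obtain ⟨g, r, x, rfl, hx, rfl⟩ := h
  exact ⟨g, r + n, x, Multiset.cons_add _ _ _, hx, Multiset.cons_add _ _ _⟩

theorem Moves.add_left (h : Moves p n s) (m : Multiset Game) : Moves p (m + n) (m + s) := by
  rw [add_comm m, add_comm m]
  exact h.add_right m

theorem moves_add : Moves p (m + n) s ↔
    (∃ m', Moves p m m' ∧ s = m' + n) ∨ ∃ n', Moves p n n' ∧ s = m + n' := by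
  refine ⟨?_, by rintro (⟨m', h, rfl⟩ | ⟨n', h, rfl⟩); exacts [h.add_right n, h.add_left m]⟩
  rintro ⟨g, r, x, he, hx, rfl⟩
  rcases Multiset.mem_add.1 (he ▸ Multiset.mem_cons_self g r) with hg | hg
  · obtain ⟨t, rfl⟩ := Multiset.exists_cons_of_mem hg
    rw [Multiset.cons_add, Multiset.cons_inj_right] at he
    exact .inl ⟨_, ⟨g, t, x, rfl, hx, rfl⟩, by rw [Multiset.cons_add, he]⟩
  · obtain ⟨t, rfl⟩ := Multiset.exists_cons_of_mem hg
    rw [Multiset.add_cons, Multiset.cons_inj_right] at he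
    exact .inr ⟨_, ⟨g, t, x, rfl, hx, rfl⟩, by rw [Multiset.add_cons, he]⟩

theorem Moves.swap (h : Moves p s a) (h' : Moves q a c) : ∃ b, Moves q s b ∧ Moves p b c := by
  obtain ⟨g, r, x, rfl, hx, rfl⟩ := h
  rw [← Multiset.singleton_add, moves_add] at h'
  rcases h' with ⟨g', hg', rfl⟩ | ⟨r', hr', rfl⟩
  · obtain ⟨y, hy, rfl⟩ := moves_singleton.1 hg'
    simp only [play_V, Finset.mem_erase] at hy
    refine ⟨play q g y ::ₘ r, ⟨g, r, y, rfl, hy.2, rfl⟩, play q g y, r, x, rfl, ?_, ?_⟩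
    · simp only [play_V, Finset.mem_erase, hx, hy.1.symm, ne_eq, not_false_eq_true, and_self]
    · rw [play_comm q p g hy.1.symm, Multiset.singleton_add]
  · exact ⟨{g} + r', Multiset.singleton_add g r ▸ hr'.add_left {g},
      (moves_singleton.2 ⟨x, hx, rfl⟩).add_right r'⟩

theorem Moves.diamond (h : Moves p s a) (h' : Moves p s b) :
    a = b ∨ ∃ c, Moves p a c ∧ Moves p b c := by
  obtain ⟨g, r, x, rfl, hx, rfl⟩ := h
  rw [← Multiset.singleton_add, moves_add] at h'
  rcases h' with ⟨g', hg', rfl⟩ | ⟨r', hr', rfl⟩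
  · obtain ⟨y, hy, rfl⟩ := moves_singleton.1 hg'
    obtain rfl | hxy := eq_or_ne x y
    · exact .inl rfl
    refine .inr ⟨play p (play p g x) y ::ₘ r, ⟨_, r, y, rfl, ?_, rfl⟩, _, r, x, rfl, ?_, ?_⟩
    · rw [play_V]; exact Finset.mem_erase.2 ⟨hxy.symm, hy⟩
    · rw [play_V]; exact Finset.mem_erase.2 ⟨hxy, hx⟩
    · rw [play_comm p p g hxy]
  · exact .inr ⟨{play p g x} + r', hr'.add_left {play p g x},
      (moves_singleton.2 ⟨x, hx, rfl⟩).add_right r'⟩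

theorem finite_moves (p : Player) (s : Multiset Game) : {s' | Moves p s s'}.Finite := by
  classical
  refine (s.toFinset.finite_toSet.biUnion fun g _ => g.V.finite_toSet.image fun x =>
    play p g x ::ₘ s.erase g).subset ?_
  rintro _ ⟨g, r, x, rfl, hx, rfl⟩
  exact Set.mem_biUnion (x := g) (by simp) ⟨x, hx, by rw [Multiset.erase_cons_head]⟩

theorem size_add : size (m + n) = size m + size n := by
  simp only [size, Multiset.map_add, Multiset.sum_add]

theorem size_singleton (g : Game) : size {g} = g.V.card := by
  simp only [size, Multiset.map_singleton, Multiset.sum_singleton]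

theorem Moves.size_eq (h : Moves p s s') : size s = size s' + 1 := by
  obtain ⟨g, r, x, rfl, hx, rfl⟩ := h
  simp only [← Multiset.singleton_add, size_add, size_singleton, play_V,
    ← Finset.card_erase_add_one hx]
  omega

theorem exists_moves_iff : (∃ s', Moves p s s') ↔ size s ≠ 0 := by
  refine ⟨fun ⟨s', h⟩ => h.size_eq ▸ Nat.succ_ne_zero _, fun h => ?_⟩
  obtain ⟨g, hg, hg0⟩ : ∃ g ∈ s, g.V.card ≠ 0 := by
    by_contra! hc
    exact h (Multiset.sum_eq_zero (by simpa using hc))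
  obtain ⟨r, rfl⟩ := Multiset.exists_cons_of_mem hg
  obtain ⟨x, hx⟩ := Finset.card_ne_zero.1 hg0
  exact ⟨_, g, r, x, rfl, hx, rfl⟩

/-- `s'` arises from `s` by one move of either player. -/
def Step (s s' : Multiset Game) : Prop := ∃ p, Moves p s s'

theorem size_lt_of_transGen_step (h : Relation.TransGen Step s s') : size s' < size s := by
  induction h with
  | single h => obtain ⟨p, h⟩ := h; exact h.size_eq ▸ Nat.lt_succ_self _
  | tail _ h ih => obtain ⟨p, h⟩ := h; have := h.size_eq; omega

theorem finite_transGen_step (s : Multiset Game) : {s' | Relation.TransGen Step s s'}.Finite := by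
  induction hk : size s using Nat.strong_induction_on generalizing s with
  | _ k ih =>
    have hstep : {a | Step s a}.Finite := by
      refine ((finite_moves .L s).union (finite_moves .R s)).subset ?_
      rintro a ⟨_ | _, ha⟩
      exacts [.inl ha, .inr ha]
    refine (hstep.union (hstep.biUnion fun a ha => ih (size a) ?_ a rfl)).subset fun s' hs' => ?_
    · exact hk ▸ size_lt_of_transGen_step (.single ha)
    · rcases Relation.TransGen.head'_iff.1 hs' with ⟨a, ha, hs'⟩
      rcases Relation.reflTransGen_iff_eq_or_transGen.1 hs' with rfl | hs'
      exacts [.inl ha, .inr (Set.mem_biUnion ha hs')]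

end Families

section Wins

/-- Player `p` wins on the family of boards `s`. The Boolean `turn` is `true` when `p` moves next
and `false` when the opponent does. -/
inductive Wins (p : Player) : Bool → Multiset Game → Prop
  | won {turn : Bool} {s : Multiset Game} : Won p s → Wins p turn s
  | move {s s' : Multiset Game} : ¬ Won p.other s → Moves p s s' → Wins p false s' → Wins p true s
  | reply {s : Multiset Game} : ¬ Won p.other s → size s ≠ 0 →
      (∀ s', Moves p.other s s' → Wins p true s') → Wins p false s

variable {p : Player} {turn : Bool} {s s' a m n : Multiset Game}

theorem Wins.not_won_other (h : Wins p turn s) (hw : ¬ Won p s) : ¬ Won p.other s := by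
  cases h <;> first | assumption | exact absurd ‹_› hw

theorem Wins.won_of_size_eq_zero (h : Wins p turn s) (h0 : size s = 0) : Won p s := by
  cases h with
  | won h => exact h
  | move _ hm => exact absurd h0 (exists_moves_iff.1 ⟨_, hm⟩)
  | reply _ hs => exact absurd h0 hs

theorem Wins.exists_move (h : Wins p true s) (hw : ¬ Won p s) :
    ∃ s', Moves p s s' ∧ Wins p false s' := by
  cases h with
  | won h => exact absurd h hw
  | move _ hm h => exact ⟨_, hm, h⟩

theorem Wins.after_reply (h : Wins p false s) (hw : ¬ Won p s) (hm : Moves p.other s s') :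
    Wins p true s' := by
  cases h with
  | won h => exact absurd h hw
  | reply _ _ h => exact h s' hm

theorem exists_reply_not_wins (h : ¬ Wins p false s) (hw : ¬ Won p.other s) (h0 : size s ≠ 0) :
    ∃ s', Moves p.other s s' ∧ ¬ Wins p true s' := by
  by_contra! hc
  exact h (.reply hw h0 hc)

theorem Wins.of_extra_move (h : Wins p turn s) (ha : Moves p s a) : Wins p turn a := by
  induction h generalizing a with
  | won h => exact .won (h.of_extra_move ha)
  | @move s z hw hz hzw ih =>
    have hwa : ¬ Won p.other a := fun h => hw (h.of_undone_reply (by rwa [Player.other_other]))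
    rcases hz.diamond ha with rfl | ⟨c, hzc, hac⟩
    · by_cases h0 : size z = 0
      · exact .won (hzw.won_of_size_eq_zero h0)
      · obtain ⟨c, hc⟩ := exists_moves_iff (p := p).2 h0
        exact .move hwa hc (ih hc)
    · exact .move hwa hac (ih hzc)
  | @reply s hw h0 hr ih =>
    have hwa : ¬ Won p.other a := fun h => hw (h.of_undone_reply (by rwa [Player.other_other]))
    by_cases ha0 : size a = 0
    · obtain ⟨y, hy⟩ := exists_moves_iff (p := p.other).2 h0
      have hy0 : size y = 0 := by have := hy.size_eq; have := ha.size_eq; omega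
      exact .won ((((hr y hy).won_of_size_eq_zero hy0).of_undone_reply hy).of_extra_move ha)
    · refine .reply hwa ha0 fun c hc => ?_
      obtain ⟨b, hb, hbc⟩ := ha.swap hc
      exact ih b hb hbc

theorem Wins.of_false (h : Wins p false s) : Wins p true s := by
  by_cases hw : Won p s
  · exact .won hw
  obtain ⟨c, hc⟩ := exists_moves_iff (p := p).2 fun h0 => hw (h.won_of_size_eq_zero h0)
  exact .move (h.not_won_other hw) hc (h.of_extra_move hc)

theorem Wins.of_undone_reply (h : Wins p turn a) (hs : Moves p.other s a) : Wins p turn s := by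
  induction h generalizing s with
  | won h => exact .won (h.of_undone_reply hs)
  | move hw hm _ ih =>
    obtain ⟨b, hb, hbc⟩ := hs.swap hm
    exact .move (fun h => hw (h.of_extra_move hs)) hb (ih hbc)
  | reply hw h0 hr ih =>
    refine .reply (fun h => hw (h.of_extra_move hs)) (exists_moves_iff.1 ⟨_, hs⟩) fun b hb => ?_
    rcases hs.diamond hb with rfl | ⟨c, hac, hbc⟩
    · exact (Wins.reply hw h0 hr).of_false
    · exact ih c hac hbc

/-- The opponent answers each move on the component where it was made. -/
theorem Wins.of_add (h : Wins p turn (m + n)) : Wins p turn m ∨ Wins p true n := by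
  generalize hs : m + n = s at h
  induction h generalizing m n with
  | won h =>
    subst hs
    exact (won_add.1 h).imp .won .won
  | move hw hm _ ih =>
    subst hs
    rw [won_add, not_or] at hw
    rcases moves_add.1 hm with ⟨m', hm', rfl⟩ | ⟨n', hn', rfl⟩
    · exact (ih rfl).imp_left (.move hw.1 hm')
    · exact (ih (add_comm n' m)).symm.imp_right (.move hw.2 hn')
  | reply hw h0 _ ih =>
    subst hs
    rw [won_add, not_or] at hw
    refine or_iff_not_imp_right.2 fun hn => ?_
    by_cases hm0 : size m = 0
    · obtain ⟨n', hn'⟩ := exists_moves_iff (p := p.other).2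
        (show size n ≠ 0 by rw [size_add] at h0; omega)
      have hm := (ih _ (hn'.add_left m) rfl).resolve_right fun h => hn (h.of_undone_reply hn')
      exact .won (hm.won_of_size_eq_zero hm0)
    · exact .reply hw.1 hm0 fun m' hm' => (ih _ (hm'.add_right n) rfl).resolve_right hn

/-- Moving second, `p` answers on `m` by a winning strategy and on `n` by a non-losing one; moving
first, `p` opens on `n`. -/
theorem Wins.add_of_false (hm : Wins p false m) (hn : ¬ Wins p.other turn n) :
    Wins p (!turn) (m + n) := by
  induction hN : size (m + n) using Nat.strong_induction_on generalizing m n turn with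
  | _ N ih =>
    by_cases hpm : Won p m
    · exact .won (won_add.2 (.inl hpm))
    by_cases hpn : Won p n
    · exact .won (won_add.2 (.inr hpn))
    have hom := hm.not_won_other hpm
    have hon : ¬ Won p.other n := fun h => hn (.won h)
    have ho : ¬ Won p.other (m + n) := fun h => (won_add.1 h).elim hom hon
    have hm0 : size m ≠ 0 := fun h => hpm (hm.won_of_size_eq_zero h)
    cases turn with
    | true =>
      refine .reply ho (by rw [size_add]; omega) fun s' hs' => ?_
      have hs'N := hs'.size_eq
      rcases moves_add.1 hs' with ⟨m', hm', rfl⟩ | ⟨n', hn', rfl⟩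
      · have hpm' : ¬ Won p m' := fun h => hpm (h.of_undone_reply hm')
        have hwm' := hm.after_reply hpm hm'
        obtain ⟨m'', hm'', hwm''⟩ := hwm'.exists_move hpm'
        have hm''N := (hm''.add_right n).size_eq
        exact .move (fun h => (won_add.1 h).elim (hwm'.not_won_other hpm') hon)
          (hm''.add_right n) (ih _ (by omega) hwm'' hn rfl)
      · refine ih _ (by omega) (turn := false) hm (fun h => hn ?_) rfl
        exact .move (by rwa [Player.other_other]) hn' h
    | false =>
      by_cases hn0 : size n = 0
      · obtain ⟨m', hm'⟩ := exists_moves_iff (p := p).2 hm0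
        have hm'N := (hm'.add_right n).size_eq
        exact .move ho (hm'.add_right n) (ih _ (by omega) (turn := true) (hm.of_extra_move hm')
          (fun h => hon (h.won_of_size_eq_zero hn0)) rfl)
      · obtain ⟨n', hn', hwn'⟩ := exists_reply_not_wins hn (by rwa [Player.other_other]) hn0
        rw [Player.other_other] at hn'
        have hn'N := (hn'.add_left m).size_eq
        exact .move ho (hn'.add_left m) (ih _ (by omega) hm hwn' rfl)

theorem Wins.add_of_true (hm : Wins p true m) (hn : ¬ Wins p.other true n) :
    Wins p true (m + n) := by
  by_cases hpm : Won p m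
  · exact .won (won_add.2 (.inl hpm))
  obtain ⟨m', hm', hwm'⟩ := hm.exists_move hpm
  exact .move (fun h => (won_add.1 h).elim (hm.not_won_other hpm) fun h => hn (.won h))
    (hm'.add_right n) (hwm'.add_of_false hn)

theorem Wins.of_bisimulation {R : Multiset Game → Multiset Game → Prop}
    (hwon : ∀ {s t}, R s t → ∀ q, Won q s ↔ Won q t)
    (forth : ∀ {s t}, R s t → ∀ q s', Moves q s s' → ∃ t', Moves q t t' ∧ R s' t')
    (back : ∀ {s t}, R s t → ∀ q t', Moves q t t' → ∃ s', Moves q s s' ∧ R s' t')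
    (h : Wins p turn s) {t : Multiset Game} (hst : R s t) : Wins p turn t := by
  induction h generalizing t with
  | won h => exact .won ((hwon hst p).1 h)
  | move hw hm _ ih =>
    obtain ⟨t', ht', hst'⟩ := forth hst p _ hm
    exact .move (by rwa [← hwon hst]) ht' (ih hst')
  | reply hw h0 _ ih =>
    obtain ⟨s', hs'⟩ := exists_moves_iff (p := p.other).2 h0
    obtain ⟨t', ht', -⟩ := forth hst p.other s' hs'
    refine .reply (by rwa [← hwon hst]) (exists_moves_iff.1 ⟨t', ht'⟩) fun t' ht' => ?_
    obtain ⟨s', hs', hst'⟩ := back hst p.other t' ht'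
    exact ih s' hs' hst'

end Wins

section Race

open Relation

/-- Moving next if `turn` is `true` and after the opponent otherwise, `p` can ensure that every
position reached after a move of `p` satisfies `P`, until `p` fills an edge. -/
inductive Maintains (p : Player) (P : Multiset Game → Prop) : Bool → Multiset Game → Prop
  | won {s : Multiset Game} : P s → Won p s → Maintains p P false s
  | move {s s' : Multiset Game} : Moves p s s' → Maintains p P false s' → Maintains p P true s
  | reply {s : Multiset Game} : P s → (∀ s', Moves p.other s s' → Maintains p P true s') →
      Maintains p P false s

variable {p : Player} {turn : Bool} {P Q : Multiset Game → Prop}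
  {a a' b c d m n s : Multiset Game}

theorem Maintains.mono (hPQ : ∀ s, P s → Q s) (h : Maintains p P turn s) :
    Maintains p Q turn s := by
  induction h with
  | won hP hw => exact .won (hPQ _ hP) hw
  | move hm _ ih => exact .move hm ih
  | reply hP _ ih => exact .reply (hPQ _ hP) ih

theorem Maintains.self_of_false (h : Maintains p P false s) : P s := by
  cases h <;> assumption

theorem Maintains.exists_of_true (h : Maintains p P true s) : ∃ a, P a := by
  cases h with
  | move _ h => exact ⟨_, h.self_of_false⟩

theorem Maintains.and_transGen_step (h : Maintains p P turn s)
    (htrue : turn = true → ReflTransGen Step m s) (hfalse : turn = false → TransGen Step m s) :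
    Maintains p (fun a => P a ∧ TransGen Step m a) turn s := by
  induction h with
  | won hP hw => exact .won ⟨hP, hfalse rfl⟩ hw
  | move hm _ ih =>
    exact .move hm (ih (fun h => Bool.noConfusion h) fun _ => TransGen.tail' (htrue rfl) ⟨p, hm⟩)
  | reply hP _ ih =>
    exact .reply ⟨hP, hfalse rfl⟩ fun a ha =>
      ih a ha (fun _ => ((hfalse rfl).tail ⟨p.other, ha⟩).to_reflTransGen)
        fun h => Bool.noConfusion h

theorem Wins.maintains (h : Wins p turn s) (hw : turn = true → ¬ Won p s) :
    Maintains p (Wins p false) turn s := by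
  induction h with
  | @won turn s h =>
    cases turn
    exacts [.won (.won h) h, absurd h (hw rfl)]
  | move _ hm _ ih => exact .move hm (ih fun h => Bool.noConfusion h)
  | @reply s ho h0 hr ih =>
    by_cases hws : Won p s
    · exact .won (.won hws) hws
    · exact .reply (.reply ho h0 hr) fun a ha => ih a ha fun _ h => hws (h.of_undone_reply ha)

/-- On `a + n` the opponent follows a non-losing strategy, while `p` answers each move on `a` so as
to maintain `P`. Each opponent move on `n` then leads to such a family `b`. -/
theorem Maintains.transfer_of_false (ha : Maintains p P false a) (hP : ∀ s, P s → Wins p false s)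
    (hn : Wins p.other true n) (hwn : ¬ Won p.other n) (h : ¬ Wins p false (a + n)) :
    Maintains p.other (fun b => Wins p.other false b ∧ ∃ a, P a ∧ ¬ Wins p true (a + b))
      true n := by
  induction hk : size (a + n) using Nat.strong_induction_on generalizing a n with
  | _ k ih =>
    have hwa := hP a ha.self_of_false
    have hpa : ¬ Won p a := fun hw => h (.won (won_add.2 (.inl hw)))
    have hoa := hwa.not_won_other hpa
    have ha0 : size a ≠ 0 := fun h0 => hpa (hwa.won_of_size_eq_zero h0)
    obtain ⟨s, hs, hws⟩ := exists_reply_not_wins h (fun hw => (won_add.1 hw).elim hoa hwn)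
      (by rw [size_add]; omega)
    have hsk := hs.size_eq
    rcases moves_add.1 hs with ⟨a', ha', rfl⟩ | ⟨b, hb, rfl⟩
    · have hoa' := (hwa.after_reply hpa ha').not_won_other fun hw => hpa (hw.of_undone_reply ha')
      cases ha with
      | won _ hw => exact absurd hw hpa
      | reply _ hr =>
        cases hr a' ha' with
        | move ha'' h'' =>
          have ha''k := (ha''.add_right n).size_eq
          exact ih _ (by omega) h'' hn hwn (fun hw => hws (.move
            (fun hw => (won_add.1 hw).elim hoa' hwn) (ha''.add_right n) hw)) rfl
    · have hwb : Wins p.other false b := by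
        by_contra hwb
        exact hws (hwa.add_of_false hwb)
      have hPb : Wins p.other false b ∧ ∃ a, P a ∧ ¬ Wins p true (a + b) :=
        ⟨hwb, a, ha.self_of_false, hws⟩
      by_cases hob : Won p.other b
      · exact .move hb (.won hPb hob)
      refine .move hb (.reply hPb fun n' hn' => ?_)
      have hon' : ¬ Won p.other n' := fun hw => hob (hw.of_undone_reply hn')
      have hwn' := hwb.after_reply hob hn'
      rw [Player.other_other] at hn'
      have hn'k := (hn'.add_left a).size_eq
      exact ih _ (by omega) ha hwn' hon' (fun hw => hws (.move
        (fun hw => (won_add.1 hw).elim hoa hob) (hn'.add_left a) hw)) rfl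

theorem Maintains.transfer (hm : Maintains p P true m) (hP : ∀ s, P s → Wins p false s)
    (hn : Wins p.other true n) (hmn : ∀ q, ¬ Wins q true (m + n)) :
    Maintains p.other (fun b => (Wins p.other false b ∧ ∃ a, P a ∧ ¬ Wins p true (a + b)) ∧
      TransGen Step n b) true n := by
  have hwo : ¬ Won p.other (m + n) := fun hw => hmn _ (.won hw)
  cases hm with
  | move ha h =>
    exact (h.transfer_of_false hP hn (fun hw => hwo (won_add.2 (.inr hw)))
      fun hw => hmn p (.move hwo (ha.add_right n) hw)).and_transGen_step
        (fun _ => .refl) fun h => Bool.noConfusion h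

/-- Those families reachable from `n` that the opponent of `p` wins moving second, but not moving
first once the family `a` is added. Their number is what each double round increases. -/
def blocked (p : Player) (n a : Multiset Game) : Set (Multiset Game) :=
  {b | Wins p.other false b ∧ TransGen Step n b ∧ ¬ Wins p.other true (b + a)}

theorem finite_blocked (p : Player) (n a : Multiset Game) : (blocked p n a).Finite :=
  (finite_transGen_step n).subset fun _ hb => hb.2.1

theorem Maintains.improve (hm : Maintains p P true m) (hP : ∀ s, P s → Wins p false s)
    (hwm : Wins p true m) (hn : Wins p.other true n) (hmn : ∀ q, ¬ Wins q true (m + n)) :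
    Maintains p (fun a' => Wins p false a' ∧ TransGen Step m a' ∧
      ∃ b ∈ blocked p n a', ∃ a, P a ∧ ¬ Wins p true (a + b)) true m := by
  have h := (hm.transfer hP hn hmn).transfer (n := m) (fun b hb => hb.1.1)
    (by rwa [Player.other_other]) (by rwa [add_comm])
  simp only [Player.other_other] at h
  exact h.mono fun a' ⟨⟨hwa', b, ⟨⟨hwb, hab⟩, hnb⟩, hba'⟩, hma'⟩ =>
    ⟨hwa', hma', b, ⟨hwb, hnb, hba'⟩, hab⟩

/-- A win on `a + d` against a non-losing reply strategy on `b + c` is a win on all four families,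
hence on `a + b` or on `c + d`. -/
theorem not_wins_add_trans (hab : ¬ Wins p true (a + b)) (hbc : ¬ Wins p.other true (b + c))
    (hcd : ¬ Wins p true (c + d)) : ¬ Wins p true (a + d) := fun had => by
  have h := had.add_of_true hbc
  rw [show a + d + (b + c) = a + b + (c + d) by abel] at h
  exact h.of_add.elim hab hcd

theorem blocked_subset (hab : ¬ Wins p true (a + b)) (hba' : ¬ Wins p.other true (b + a')) :
    blocked p n a ⊆ blocked p n a' := fun _ ⟨hwc, hnc, hca⟩ =>
  ⟨hwc, hnc, not_wins_add_trans hca (by rwa [Player.other_other]) hba'⟩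

theorem exists_wins_add (hm : Wins p true m) (hn : Wins p.other true n) :
    ∃ q, Wins q true (m + n) := by
  induction hk : size m + size n using Nat.strong_induction_on generalizing m n with
  | _ k ih =>
    by_contra! hmn
    have hrank : ∀ j, Maintains p (fun a => Wins p false a ∧ TransGen Step m a ∧
        j ≤ (blocked p n a).ncard) true m := by
      intro j
      induction j with
      | zero =>
        exact ((hm.maintains fun _ hw => hmn p (.won (won_add.2 (.inl hw)))).and_transGen_step
          (fun _ => .refl) fun h => Bool.noConfusion h).mono
            fun a ha => ⟨ha.1, ha.2, Nat.zero_le _⟩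
      | succ j ihj =>
        refine (ihj.improve (fun a ha => ha.1) hm hn hmn).mono ?_
        rintro a' ⟨hwa', hma', b, hb, a, ⟨hwa, hma, hja⟩, hab⟩
        refine ⟨hwa', hma', hja.trans_lt (Set.ncard_lt_ncard ?_ (finite_blocked p n a'))⟩
        refine (Set.ssubset_iff_of_subset (blocked_subset hab hb.2.2)).2 ⟨b, hb, fun hba => ?_⟩
        have hsize := add_lt_add (size_lt_of_transGen_step hma) (size_lt_of_transGen_step hb.2.1)
        obtain ⟨q, hq⟩ := ih _ (hk ▸ hsize) hwa.of_false hb.1.of_false rfl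
        rcases Player.eq_or_eq_other p q with rfl | rfl
        exacts [hab hq, hba.2.2 (add_comm a b ▸ hq)]
    obtain ⟨a, -, -, ha⟩ := (hrank ({b | TransGen Step n b}.ncard + 1)).exists_of_true
    have hcard : (blocked p n a).ncard ≤ {b | TransGen Step n b}.ncard :=
      Set.ncard_le_ncard (fun _ hb => hb.2.1) (finite_transGen_step n)
    omega

end Race

section Strategies

variable {G : Game} {s p : Player} {σ : Strategy} {h : List ℕ} {x : ℕ}

theorem mover_zero (s : Player) : mover s 0 = s := rfl

theorem mover_succ (s : Player) (i : ℕ) : mover s (i + 1) = mover s.other i := by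
  rcases Nat.mod_two_eq_zero_or_one i with hi | hi <;> simp [mover, Nat.add_mod, hi]

theorem mem_picked : x ∈ picked s p h ↔ ∃ i < h.length, mover s i = p ∧ h.getD i 0 = x := by
  simp only [picked, Finset.mem_image, Finset.mem_filter, Finset.mem_range, and_assoc]

theorem picked_nil (s p : Player) : picked s p [] = ∅ := rfl

theorem mem_of_mem_picked (hx : x ∈ picked s p h) : x ∈ h := by
  obtain ⟨i, hi, -, rfl⟩ := mem_picked.1 hx
  exact List.getD_eq_getElem h 0 hi ▸ List.getElem_mem hi

theorem picked_cons (s p : Player) (x : ℕ) (h : List ℕ) :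
    picked s p (x :: h) =
      if s = p then insert x (picked s.other p h) else picked s.other p h := by
  ext y
  split_ifs with hsp <;>
    simp only [mem_picked, Finset.mem_insert, List.length_cons, Nat.exists_lt_succ_left,
      mover_zero, mover_succ, List.getD_cons_zero, List.getD_cons_succ, hsp, true_and, false_and,
      false_or, eq_comm]

theorem fills_picked_cons (hx : x ∉ h) :
    fills (G.edges p) (picked s p (x :: h)) ↔
      fills ((play s G x).edges p) (picked s.other p h) := by
  rw [picked_cons]
  rcases Player.eq_or_eq_other s p with rfl | rfl
  · rw [if_pos rfl, fills_play_self]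
  · rw [if_neg (Player.other_ne s).symm, fills_play_other fun hxp => hx (mem_of_mem_picked hxp)]

theorem ended_iff_exists : ended G s h ↔ ∃ p, fills (G.edges p) (picked s p h) :=
  ⟨fun he => he.elim (⟨.L, ·⟩) (⟨.R, ·⟩), by rintro ⟨_ | _, he⟩; exacts [.inl he, .inr he]⟩

theorem ended_nil : ended G s [] ↔ ∃ p, Won p {G} := by
  simp only [ended_iff_exists, won_singleton, picked_nil]

theorem ended_cons (hx : x ∉ h) : ended G s (x :: h) ↔ ended (play s G x) s.other h := by
  simp only [ended_iff_exists, fills_picked_cons hx]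

theorem validHist_nil : ValidHist G s [] :=
  ⟨.nil, by simp, by simp⟩

theorem ValidHist.cons (he : ¬ ended G s []) (hx : x ∈ G.V)
    (hh : ValidHist (play s G x) s.other h) : x ∉ h ∧ ValidHist G s (x :: h) := by
  obtain ⟨hnodup, hmem, hne⟩ := hh
  simp only [play_V, Finset.mem_erase] at hmem
  have hxh : x ∉ h := fun hxh => (hmem x hxh).1 rfl
  refine ⟨hxh, List.nodup_cons.2 ⟨hxh, hnodup⟩,
    List.forall_mem_cons.2 ⟨hx, fun y hy => (hmem y hy).2⟩, ?_⟩
  rintro (_ | k) hk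
  · exact he
  · rw [List.take_succ_cons, ended_cons fun hxk => hxh (List.mem_of_mem_take hxk)]
    exact hne k (Nat.lt_of_succ_lt_succ hk)

theorem follows_cons : Follows s p σ (x :: h) ↔
    (s = p → x = σ []) ∧ Follows s.other p (fun h => σ (x :: h)) h := by
  simp only [Follows, List.length_cons, Nat.forall_lt_succ_left, mover_zero, mover_succ,
    List.getD_cons_zero, List.getD_cons_succ, List.take_zero, List.take_succ_cons]

theorem complete_cons (hxV : x ∈ G.V) (hx : x ∉ h) :
    Complete G s (x :: h) ↔ Complete (play s G x) s.other h := by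
  rw [Complete, Complete, ended_cons hx, play_V, List.length_cons,
    ← Finset.card_erase_add_one hxV, Nat.add_right_cancel_iff]

/-- Following the strategy `σ`, player `p` makes legal moves and every finished play satisfies `Φ`.
With `Φ` a win or a non-loss of `p`, these are the strategies of `WinsAs` and `NonLosingAs`. -/
def Guarantees (G : Game) (s p : Player) (σ : Strategy) (Φ : List ℕ → Prop) : Prop :=
  Legal G s p σ ∧ ∀ h, ValidHist G s h → Follows s p σ h → Complete G s h → Φ h

variable {Φ Φ' : List ℕ → Prop}

theorem Guarantees.of_complete_nil (hσ : Guarantees G s p σ Φ) (hc : Complete G s []) : Φ [] :=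
  hσ.2 [] validHist_nil (fun _ hk => absurd hk (Nat.not_lt_zero _)) hc

theorem Guarantees.mem (hσ : Guarantees G p p σ Φ) (hc : ¬ Complete G p []) : σ [] ∈ G.V := by
  rw [Complete, not_or] at hc
  exact (hσ.1 [] validHist_nil (fun _ hk => absurd hk (Nat.not_lt_zero _)) hc.1
    (Nat.pos_of_ne_zero (Ne.symm hc.2)) rfl).1

theorem Guarantees.cons (hσ : Guarantees G s p σ Φ) (he : ¬ ended G s []) (hxV : x ∈ G.V)
    (hx : s = p → x = σ []) (hΦ : ∀ h, x ∉ h → Φ (x :: h) → Φ' h) :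
    Guarantees (play s G x) s.other p (fun h => σ (x :: h)) Φ' := by
  refine ⟨fun h hv hf hne hlt hmove => ?_, fun h hv hf hc => ?_⟩ <;>
    obtain ⟨hxh, hvx⟩ := hv.cons he hxV
  · rw [play_V] at hlt
    have hlegal := hσ.1 (x :: h) hvx (follows_cons.2 ⟨hx, hf⟩) (by rwa [ended_cons hxh])
      (by rw [List.length_cons, ← Finset.card_erase_add_one hxV]; omega)
      (by rwa [List.length_cons, mover_succ])
    rw [List.mem_cons, not_or] at hlegal
    exact ⟨by rw [play_V]; exact Finset.mem_erase.2 ⟨hlegal.2.1, hlegal.1⟩, hlegal.2.2⟩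
  · exact hΦ h hxh (hσ.2 _ hvx (follows_cons.2 ⟨hx, hf⟩) ((complete_cons hxV hxh).2 hc))

theorem complete_nil_iff : Complete G s [] ↔ (∃ q, Won q {G}) ∨ size {G} = 0 := by
  rw [Complete, ended_nil, size_singleton, List.length_nil, eq_comm (a := 0)]

theorem WinsAs.wins (hw : WinsAs G s p) : Wins p (decide (s = p)) {G} := by
  obtain ⟨σ, hσ⟩ := hw
  change Guarantees G s p σ fun h => fills (G.edges p) (picked s p h) at hσ
  induction hk : size {G} generalizing G s σ with
  | zero => exact .won (won_singleton.2 (hσ.of_complete_nil (complete_nil_iff.2 (.inr hk))))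
  | succ k ih =>
    by_cases hwon : Won p {G}
    · exact .won hwon
    have hnc : ¬ Complete G s [] := fun hc => hwon (won_singleton.2 (hσ.of_complete_nil hc))
    have hother : ¬ Won p.other {G} := fun h => hnc (complete_nil_iff.2 (.inl ⟨_, h⟩))
    have hafter : ∀ x ∈ G.V, (s = p → x = σ []) →
        Wins p (decide (s.other = p)) {play s G x} := fun x hxV hx => by
      have hsize := (moves_singleton (p := s).2 ⟨x, hxV, rfl⟩).size_eq
      exact ih _ (hσ.cons (fun he => hnc (.inl he)) hxV hx fun h hxh => (fills_picked_cons hxh).1)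
        (by omega)
    rcases Player.eq_or_eq_other p s with rfl | rfl
    · rw [decide_eq_true rfl]
      refine .move hother (moves_singleton.2 ⟨_, hσ.mem hnc, rfl⟩) ?_
      exact decide_eq_false (Player.other_ne s) ▸ hafter _ (hσ.mem hnc) fun _ => rfl
    · rw [decide_eq_false (Player.other_ne p)]
      refine .reply hother (by omega) fun s' hs' => ?_
      obtain ⟨x, hxV, rfl⟩ := moves_singleton.1 hs'
      exact decide_eq_true (Player.other_other p) ▸
        hafter x hxV fun h => absurd h (Player.other_ne p)

theorem NonLosingAs.not_wins (hl : NonLosingAs G s p) :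
    ¬ Wins p.other (decide (s = p.other)) {G} := by
  obtain ⟨σ, hσ⟩ := hl
  change Guarantees G s p σ fun h => ¬ fills (G.edges p.other) (picked s p.other h) at hσ
  intro hw
  induction hk : size {G} using Nat.strong_induction_on generalizing G s σ with
  | _ k ih =>
    have hwon : ¬ Won p.other {G} := fun h =>
      hσ.of_complete_nil (complete_nil_iff.2 (.inl ⟨_, h⟩)) (won_singleton.1 h)
    have hnc : ¬ Complete G s [] := fun hc => (complete_nil_iff.1 hc).elim
      (fun ⟨q, hq⟩ => by
        rcases Player.eq_or_eq_other p.other q with rfl | rfl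
        exacts [hwon hq, hw.not_won_other hwon hq])
      fun h0 => hwon (hw.won_of_size_eq_zero h0)
    have hafter : ∀ x ∈ G.V, (s = p → x = σ []) →
        ¬ Wins p.other (decide (s.other = p.other)) {play s G x} := fun x hxV hx h => by
      have hsize := (moves_singleton (p := s).2 ⟨x, hxV, rfl⟩).size_eq
      exact ih _ (by omega) _ (hσ.cons (fun he => hnc (.inl he)) hxV hx
        fun h hxh => mt (fills_picked_cons hxh).2) h rfl
    rcases Player.eq_or_eq_other p s with rfl | rfl
    · rw [decide_eq_false (Player.other_ne s).symm] at hw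
      rw [decide_eq_true rfl] at hafter
      refine hafter _ (hσ.mem hnc) (fun _ => rfl) (hw.after_reply hwon ?_)
      exact moves_singleton.2 ⟨_, hσ.mem hnc, by rw [Player.other_other]⟩
    · rw [decide_eq_true rfl] at hw
      rw [decide_eq_false (Player.other_ne p.other)] at hafter
      obtain ⟨s', hs', hws'⟩ := hw.exists_move hwon
      obtain ⟨x, hxV, rfl⟩ := moves_singleton.1 hs'
      exact hafter x hxV (fun h => absurd h (Player.other_ne p)) hws'

end Strategies
section Union

variable {G G' : Game} {p : Player} {turn : Bool} {x : ℕ}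

/-- Every edge lies in the vertex set; unlike for `WellFormed`, edges may be empty, since `play`
empties the edges that get filled. -/
def EdgesSubset (G : Game) : Prop := ∀ p, ∀ e ∈ G.edges p, e ⊆ G.V

theorem WellFormed.edgesSubset (hG : WellFormed G) : EdgesSubset G
  | .L, e, he => (hG.1 e he).1
  | .R, e, he => (hG.2 e he).1

protected theorem EdgesSubset.play (hG : EdgesSubset G) (p : Player) (x : ℕ) :
    EdgesSubset (play p G x) := by
  intro q d hd
  rw [play_V]
  rcases Player.eq_or_eq_other p q with rfl | rfl
  · rw [edges_play_self] at hd
    obtain ⟨e, he, rfl⟩ := Finset.mem_image.1 hd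
    exact Finset.erase_subset_erase x (hG _ e he)
  · rw [edges_play_other, Finset.mem_filter] at hd
    exact Finset.subset_erase.2 ⟨hG _ d hd.1, hd.2⟩

/-- The boards `G` and `G'` live on disjoint vertex sets. -/
structure Separated (G G' : Game) : Prop where
  left : EdgesSubset G
  right : EdgesSubset G'
  disjoint : Disjoint G.V G'.V

theorem Separated.symm (h : Separated G G') : Separated G' G :=
  ⟨h.right, h.left, h.disjoint.symm⟩

theorem Separated.play_left (h : Separated G G') (p : Player) (x : ℕ) :
    Separated (play p G x) G' :=
  ⟨h.left.play p x, h.right,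
    h.disjoint.mono_left (play_V p G x ▸ Finset.erase_subset x G.V)⟩

theorem Separated.play_right (h : Separated G G') (p : Player) (x : ℕ) :
    Separated G (play p G' x) :=
  (h.symm.play_left p x).symm

theorem edges_gunion (G G' : Game) (p : Player) :
    (gunion G G').edges p = G.edges p ∪ G'.edges p := by
  cases p <;> rfl

theorem gunion_comm (G G' : Game) : gunion G G' = gunion G' G :=
  Game.ext_edges (Finset.union_comm _ _) fun p => by
    rw [edges_gunion, edges_gunion, Finset.union_comm]

theorem Separated.play_gunion_left (h : Separated G G') (hx : x ∈ G.V) (p : Player) :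
    play p (gunion G G') x = gunion (play p G x) G' := by
  have hxV : x ∉ G'.V := Finset.disjoint_left.1 h.disjoint hx
  have hxe : ∀ q, ∀ e ∈ G'.edges q, x ∉ e := fun q e he hxe => hxV (h.right q e he hxe)
  refine Game.ext_edges ?_ fun q => ?_
  · rw [play_V, gunion, gunion, play_V, Finset.erase_union_distrib, Finset.erase_eq_of_notMem hxV]
  · rw [edges_gunion]
    rcases Player.eq_or_eq_other p q with rfl | rfl
    · have hid : ((G'.edges q).image fun e => e.erase x) = G'.edges q :=
        (Finset.image_congr fun e he => Finset.erase_eq_of_notMem (hxe q e he)).trans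
          Finset.image_id
      rw [edges_play_self, edges_play_self, edges_gunion, Finset.image_union, hid]
    · rw [edges_play_other, edges_play_other, edges_gunion, Finset.filter_union,
        Finset.filter_true_of_mem (hxe _)]

theorem Separated.play_gunion_right (h : Separated G G') (hx : x ∈ G'.V) (p : Player) :
    play p (gunion G G') x = gunion G (play p G' x) := by
  rw [gunion_comm, h.symm.play_gunion_left hx, gunion_comm]

theorem won_gunion : Won p {gunion G G'} ↔ Won p ({G} + {G'}) := by
  simp only [won_add, won_singleton, edges_gunion, fills, Finset.mem_union, or_and_right,
    exists_or]

theorem Wins.gunion_of_add (hw : Wins p turn ({G} + {G'})) (h : Separated G G') :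
    Wins p turn {gunion G G'} := by
  refine hw.of_bisimulation
    (R := fun s t => ∃ G G', Separated G G' ∧ s = {G} + {G'} ∧ t = {gunion G G'})
    ?_ ?_ ?_ ⟨G, G', h, rfl, rfl⟩
  · rintro _ _ ⟨G, G', -, rfl, rfl⟩ q
    exact won_gunion.symm
  · rintro _ _ ⟨G, G', h, rfl, rfl⟩ q s' hs'
    rcases moves_add.1 hs' with ⟨m, hm, rfl⟩ | ⟨n, hn, rfl⟩
    · obtain ⟨x, hx, rfl⟩ := moves_singleton.1 hm
      exact ⟨_, moves_singleton.2 ⟨x, Finset.mem_union_left _ hx, rfl⟩, _, _, h.play_left q x, rfl,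
        by rw [h.play_gunion_left hx]⟩
    · obtain ⟨x, hx, rfl⟩ := moves_singleton.1 hn
      exact ⟨_, moves_singleton.2 ⟨x, Finset.mem_union_right _ hx, rfl⟩, _, _, h.play_right q x,
        rfl, by rw [h.play_gunion_right hx]⟩
  · rintro _ _ ⟨G, G', h, rfl, rfl⟩ q t' ht'
    obtain ⟨x, hx, rfl⟩ := moves_singleton.1 ht'
    rcases Finset.mem_union.1 hx with hx | hx
    · exact ⟨_, (moves_singleton.2 ⟨x, hx, rfl⟩).add_right _, _, _, h.play_left q x, rfl,
        by rw [h.play_gunion_left hx]⟩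
    · exact ⟨_, (moves_singleton.2 ⟨x, hx, rfl⟩).add_left _, _, _, h.play_right q x, rfl,
        by rw [h.play_gunion_right hx]⟩

end Union

theorem union_N_N_not_draw_general {G G' : Game} (hG : EdgesSubset G) (hG' : EdgesSubset G')
    (hdisj : Disjoint G.V G'.V) (hL : WinsAs G .L .L) (hR : WinsAs G' .R .R) :
    ¬ (NonLosingAs (gunion G G') .L .R ∧ NonLosingAs (gunion G G') .R .L) := by
  rintro ⟨hnotL, hnotR⟩
  obtain ⟨q, hq⟩ : ∃ q, Wins q true ({G} + {G'}) := exists_wins_add hL.wins hR.wins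
  have hunion : Wins q true {gunion G G'} := hq.gunion_of_add ⟨hG, hG', hdisj⟩
  cases q
  exacts [hnotL.not_wins hunion, hnotR.not_wins hunion]

/-- If `o(G) = o(G') = N`, then `o(G ∪ G') ≠ D`. -/
theorem union_N_N_not_draw (G G' : Game) (hG : WellFormed G) (hG' : WellFormed G')
    (hdisj : Disjoint G.V G'.V)
    (hGo : hasOutcome G oN) (hG'o : hasOutcome G' oN) :
    ¬ hasOutcome (gunion G G') oD :=
  fun hD => union_N_N_not_draw_general hG.edgesSubset hG'.edgesSubset hdisj hGo.1 hG'o.2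
    ⟨hD.1.2, hD.2.1⟩

end APG
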